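/- Gaussian hypercontractivity corollary for halfspaces: let g, h be standard jointly Gaussian random variables with correlation 1−ε for ε ∈ (0,1). Then for every r ∈ ℝ, P[g ≤ r and h ≤ r] ≤ P[g ≤ r]^{2/(2−ε)}; equivalently P[h ≤ r | g ≤ r] ≤ P[g ≤ r]^{ε/(2−ε)} (and hence ≤ P[g ≤ r]^{ε/2}). -/

import Mathlib

open MeasureTheory

/-- density of the centered bivariate Gaussian with unit variances and correlation `ρ` -/
noncomputable def biGaussianDensity (ρ : ℝ) (p : ℝ × ℝ) : ℝ :=
  (1 / (2 * Real.pi * Real.sqrt (1 - ρ ^ 2))) *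
    Real.exp (-(p.1 ^ 2 - 2 * ρ * p.1 * p.2 + p.2 ^ 2) / (2 * (1 - ρ ^ 2)))

open ProbabilityTheory Filter Topology

/-- density of the standard Gaussian -/
noncomputable def gaussPdf (x : ℝ) : ℝ := (√(2 * Real.pi))⁻¹ * Real.exp (-x ^ 2 / 2)

/-- cumulative distribution function of the standard Gaussian -/
noncomputable def gaussCdf (x : ℝ) : ℝ := ∫ y in Set.Iic x, gaussPdf y

/-- standard Gaussian measure of the planar wedge cut out by two half-planes at signed distance `r`
from the origin whose normals make an angle `2 * arctan t` -/
noncomputable def wedgeMass (r t : ℝ) : ℝ := ∫ x in Set.Iic r, 2 * gaussPdf x * gaussCdf (x * t)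

lemma gaussPdf_eq_gaussianPDFReal : gaussPdf = gaussianPDFReal 0 1 := by
  ext x
  simp [gaussPdf, gaussianPDFReal]

lemma gaussPdf_pos (x : ℝ) : 0 < gaussPdf x := by
  unfold gaussPdf
  positivity

lemma continuous_gaussPdf : Continuous gaussPdf := by
  unfold gaussPdf
  fun_prop

lemma integrable_gaussPdf : Integrable gaussPdf := by
  rw [gaussPdf_eq_gaussianPDFReal]
  exact integrable_gaussianPDFReal 0 1

lemma hasDerivAt_gaussPdf (x : ℝ) : HasDerivAt gaussPdf (-x * gaussPdf x) x := by
  have h : HasDerivAt (fun y : ℝ => -y ^ 2 / 2) (-x) x := by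
    convert! ((hasDerivAt_pow 2 x).neg.div_const 2) using 1
    ring
  convert! h.exp.const_mul (√(2 * Real.pi))⁻¹ using 1
  simp only [gaussPdf]
  ring

lemma two_mul_gaussPdf_mul (r t : ℝ) :
    2 * gaussPdf r * gaussPdf (r * t) = Real.pi⁻¹ * Real.exp (-(r ^ 2 * (1 + t ^ 2)) / 2) := by
  have h : -(r ^ 2 * (1 + t ^ 2)) / 2 = -r ^ 2 / 2 + -(r * t) ^ 2 / 2 := by ring
  have h2 : (√(2 * Real.pi))⁻¹ * (√(2 * Real.pi))⁻¹ = (2 * Real.pi)⁻¹ := by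
    rw [← mul_inv, Real.mul_self_sqrt (by positivity)]
  rw [h, Real.exp_add]
  simp only [gaussPdf]
  linear_combination (2 * Real.exp (-r ^ 2 / 2) * Real.exp (-(r * t) ^ 2 / 2)) * h2 +
    Real.exp (-r ^ 2 / 2) * Real.exp (-(r * t) ^ 2 / 2) *
      (by field_simp : 2 * (2 * Real.pi)⁻¹ = Real.pi⁻¹)

lemma gaussPdf_le_one (x : ℝ) : gaussPdf x ≤ 1 := by
  have h1 : 1 ≤ √(2 * Real.pi) := Real.one_le_sqrt.2 (by linarith [Real.pi_gt_three])
  have h2 : Real.exp (-x ^ 2 / 2) ≤ 1 := Real.exp_le_one_iff.2 (by nlinarith [sq_nonneg x])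
  exact mul_le_one₀ (inv_le_one_of_one_le₀ h1) (Real.exp_pos _).le h2

lemma tendsto_sq_atBot : Tendsto (fun x : ℝ => x ^ 2) atBot atTop := by
  simpa [pow_two] using tendsto_id.atBot_mul_atBot₀ (tendsto_id (α := ℝ) (x := atBot))

lemma tendsto_gaussPdf_atBot : Tendsto gaussPdf atBot (𝓝 0) := by
  have h : Tendsto (fun x : ℝ => -x ^ 2 / 2) atBot atBot :=
    (tendsto_neg_atTop_atBot.comp tendsto_sq_atBot).atBot_div_const (by norm_num)
  have h2 := (Real.tendsto_exp_atBot.comp h).const_mul (√(2 * Real.pi))⁻¹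
  rwa [mul_zero] at h2

lemma hasDerivAt_integral_Iic {f : ℝ → ℝ} (hf : Integrable f) (hc : Continuous f) (x : ℝ) :
    HasDerivAt (fun u => ∫ y in Set.Iic u, f y) (f x) x := by
  have h : (fun u => ∫ y in Set.Iic u, f y) =
      fun u => (∫ y in Set.Iic 0, f y) + ∫ y in 0..u, f y := by
    ext u
    rw [← intervalIntegral.integral_Iic_sub_Iic hf.integrableOn hf.integrableOn]
    ring
  rw [h]
  exact (hc.integral_hasStrictDerivAt 0 x).hasDerivAt.const_add _

lemma tendsto_integral_Iic_atBot {f : ℝ → ℝ} (hf : Integrable f) :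
    Tendsto (fun u => ∫ y in Set.Iic u, f y) atBot (𝓝 0) := by
  have h : (fun u => ∫ y in Set.Iic u, f y) =
      fun u => (∫ y in Set.Iic 0, f y) - ∫ y in u..0, f y := by
    ext u
    rw [← intervalIntegral.integral_Iic_sub_Iic hf.integrableOn hf.integrableOn]
    ring
  rw [h]
  simpa using (intervalIntegral_tendsto_integral_Iic 0 hf.integrableOn tendsto_id).const_sub
    (∫ y in Set.Iic 0, f y)

lemma pos_of_hasDerivAt_pos_of_tendsto_atBot {f f' : ℝ → ℝ} (hf : ∀ x, HasDerivAt f (f' x) x)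
    (hf' : ∀ x, 0 < f' x) (h0 : Tendsto f atBot (𝓝 0)) (x : ℝ) : 0 < f x := by
  have hm : StrictMono f := strictMono_of_hasDerivAt_pos hf hf'
  exact (hm.monotone.le_of_tendsto h0 (x - 1)).trans_lt (hm (by linarith))

lemma hasDerivAt_gaussCdf (x : ℝ) : HasDerivAt gaussCdf (gaussPdf x) x :=
  hasDerivAt_integral_Iic integrable_gaussPdf continuous_gaussPdf x

lemma continuous_gaussCdf : Continuous gaussCdf :=
  continuous_iff_continuousAt.2 fun x => (hasDerivAt_gaussCdf x).continuousAt

lemma tendsto_gaussCdf_atBot : Tendsto gaussCdf atBot (𝓝 0) :=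
  tendsto_integral_Iic_atBot integrable_gaussPdf

lemma gaussCdf_pos (x : ℝ) : 0 < gaussCdf x :=
  pos_of_hasDerivAt_pos_of_tendsto_atBot hasDerivAt_gaussCdf gaussPdf_pos tendsto_gaussCdf_atBot x

lemma gaussCdf_eq (x : ℝ) : ENNReal.ofReal (gaussCdf x) = gaussianReal 0 1 (Set.Iic x) := by
  rw [gaussianReal_apply_eq_integral 0 one_ne_zero, ← gaussPdf_eq_gaussianPDFReal, gaussCdf]

lemma gaussCdf_le_one (x : ℝ) : gaussCdf x ≤ 1 := by
  have h : ENNReal.ofReal (gaussCdf x) ≤ 1 := by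
    rw [gaussCdf_eq]
    exact prob_le_one
  simpa using h

lemma gaussCdf_zero : gaussCdf 0 = 1 / 2 := by
  have h1 : ∫ y in Set.Iic 0, gaussPdf y = ∫ y in Set.Ioi 0, gaussPdf y := by
    have := integral_comp_neg_Iic 0 gaussPdf
    simpa [gaussPdf] using this
  have h2 := intervalIntegral.integral_Iic_add_Ioi (b := 0) integrable_gaussPdf.integrableOn
    integrable_gaussPdf.integrableOn
  have h3 : ∫ y, gaussPdf y = 1 := by
    rw [gaussPdf_eq_gaussianPDFReal, integral_gaussianPDFReal_eq_one 0 one_ne_zero]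
  unfold gaussCdf
  linarith

/-- the lower Mills ratio bound -/
lemma gaussCdf_mills (x : ℝ) : 0 < gaussCdf x + x / (x ^ 2 + 1) * gaussPdf x := by
  refine pos_of_hasDerivAt_pos_of_tendsto_atBot
    (f := fun x => gaussCdf x + x / (x ^ 2 + 1) * gaussPdf x)
    (f' := fun x => 2 / (x ^ 2 + 1) ^ 2 * gaussPdf x) (fun x => ?_) (fun x => ?_) ?_ x
  · have h0 : x ^ 2 + 1 ≠ 0 := by positivity
    have h := (hasDerivAt_gaussCdf x).add ((((hasDerivAt_id x).div
      ((hasDerivAt_pow 2 x).add_const 1) h0)).mul (hasDerivAt_gaussPdf x))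
    convert! h using 1
    simp
    field_simp
    ring
  · have := gaussPdf_pos x
    positivity
  · have h : Tendsto (fun x : ℝ => x / (x ^ 2 + 1) * gaussPdf x) atBot (𝓝 0) := by
      refine squeeze_zero_norm (fun x => ?_) tendsto_gaussPdf_atBot
      rw [norm_mul, Real.norm_of_nonneg (gaussPdf_pos x).le]
      refine mul_le_of_le_one_left (gaussPdf_pos x).le ?_
      rw [norm_div, Real.norm_eq_abs, Real.norm_of_nonneg (by positivity),
        div_le_one (by positivity)]
      nlinarith [sq_abs x, sq_nonneg (|x| - 1)]
    simpa using tendsto_gaussCdf_atBot.add h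

lemma integrable_wedge (t : ℝ) : Integrable fun x => 2 * gaussPdf x * gaussCdf (x * t) := by
  refine (integrable_gaussPdf.const_mul 2).mul_bdd (c := 1) ?_ ?_
  · exact (continuous_gaussCdf.comp (by fun_prop)).aestronglyMeasurable
  · refine ae_of_all _ fun x => ?_
    rw [Real.norm_of_nonneg (gaussCdf_pos _).le]
    exact gaussCdf_le_one _

lemma hasDerivAt_wedgeMass_left (r t : ℝ) :
    HasDerivAt (fun s => wedgeMass s t) (2 * gaussPdf r * gaussCdf (r * t)) r :=
  hasDerivAt_integral_Iic (integrable_wedge t) (by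
    have := continuous_gaussPdf
    have := continuous_gaussCdf
    fun_prop) r

lemma tendsto_wedgeMass_atBot (t : ℝ) : Tendsto (fun s => wedgeMass s t) atBot (𝓝 0) :=
  tendsto_integral_Iic_atBot (integrable_wedge t)

lemma wedgeMass_pos (r t : ℝ) : 0 < wedgeMass r t :=
  pos_of_hasDerivAt_pos_of_tendsto_atBot (hasDerivAt_wedgeMass_left · t)
    (fun x => by
      have := gaussPdf_pos x
      have := gaussCdf_pos (x * t)
      positivity)
    (tendsto_wedgeMass_atBot t) r

lemma wedgeMass_zero (r : ℝ) : wedgeMass r 0 = gaussCdf r := by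
  simp only [wedgeMass, mul_zero, gaussCdf_zero]
  exact integral_congr_ae (ae_of_all _ fun x => by ring)

lemma wedgeMass_one (r : ℝ) : wedgeMass r 1 = gaussCdf r ^ 2 := by
  have hd : ∀ x, HasDerivAt (fun s => wedgeMass s 1 - gaussCdf s ^ 2) 0 x := fun x => by
    convert! (hasDerivAt_wedgeMass_left x 1).sub ((hasDerivAt_gaussCdf x).pow 2) using 1
    simp
    ring
  have hc := is_const_of_deriv_eq_zero (fun x => (hd x).differentiableAt) (fun x => (hd x).deriv) r
  have hl : Tendsto (fun s => wedgeMass s 1 - gaussCdf s ^ 2) atBot (𝓝 0) := by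
    simpa using (tendsto_wedgeMass_atBot 1).sub (tendsto_gaussCdf_atBot.pow 2)
  have hl' : Tendsto (fun s => wedgeMass s 1 - gaussCdf s ^ 2) atBot
      (𝓝 (wedgeMass r 1 - gaussCdf r ^ 2)) :=
    tendsto_const_nhds.congr fun s => hc s
  linarith [tendsto_nhds_unique hl hl']

lemma integral_Iic_mul_exp {b : ℝ} (hb : 0 < b) (r : ℝ) :
    ∫ x in Set.Iic r, x * Real.exp (-b * x ^ 2) = -(2 * b)⁻¹ * Real.exp (-b * r ^ 2) := by
  have hd : ∀ x : ℝ, HasDerivAt (fun x => -(2 * b)⁻¹ * Real.exp (-b * x ^ 2))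
      (x * Real.exp (-b * x ^ 2)) x := fun x => by
    convert! (((hasDerivAt_pow 2 x).const_mul (-b)).exp).const_mul (-(2 * b)⁻¹) using 1
    field_simp
    simp [mul_comm]
  have hl : Tendsto (fun x : ℝ => -(2 * b)⁻¹ * Real.exp (-b * x ^ 2)) atBot (𝓝 0) := by
    simpa using (Real.tendsto_exp_atBot.comp
      (tendsto_sq_atBot.const_mul_atTop_of_neg (neg_lt_zero.2 hb))).const_mul (-(2 * b)⁻¹)
  simpa using integral_Iic_of_hasDerivAt_of_tendsto' (fun x _ => hd x)
    (integrable_mul_exp_neg_mul_sq hb).integrableOn hl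

lemma hasDerivAt_wedgeMass_right (r t : ℝ) :
    HasDerivAt (wedgeMass r) (-(2 * gaussPdf r * gaussPdf (r * t)) / (1 + t ^ 2)) t := by
  have hp := continuous_gaussPdf
  have hq := continuous_gaussCdf
  have hval : ∫ x in Set.Iic r, 2 * gaussPdf x * (gaussPdf (x * t) * x) =
      -(2 * gaussPdf r * gaussPdf (r * t)) / (1 + t ^ 2) := by
    have h1 : ∀ x, 2 * gaussPdf x * (gaussPdf (x * t) * x) =
        Real.pi⁻¹ * (x * Real.exp (-((1 + t ^ 2) / 2) * x ^ 2)) := fun x => by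
      rw [← mul_assoc, two_mul_gaussPdf_mul,
        show -(x ^ 2 * (1 + t ^ 2)) / 2 = -((1 + t ^ 2) / 2) * x ^ 2 by ring]
      ring
    simp_rw [h1]
    rw [integral_const_mul, integral_Iic_mul_exp (by positivity), two_mul_gaussPdf_mul,
      show -(r ^ 2 * (1 + t ^ 2)) / 2 = -((1 + t ^ 2) / 2) * r ^ 2 by ring]
    field_simp
  rw [← hval]
  refine (hasDerivAt_integral_of_dominated_loc_of_deriv_le (s := Set.univ)
    (F := fun t x => 2 * gaussPdf x * gaussCdf (x * t))
    (F' := fun t x => 2 * gaussPdf x * (gaussPdf (x * t) * x))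
    (bound := fun x => 2 * ‖x * gaussPdf x‖) univ_mem
    (Eventually.of_forall fun t => ?_) (integrable_wedge t).integrableOn ?_
    (ae_of_all _ fun x t _ => ?_) ?_ (ae_of_all _ fun x t _ => ?_)).2
  · exact (by fun_prop : Continuous fun x => 2 * gaussPdf x * gaussCdf (x * t)).aestronglyMeasurable
  · exact (by fun_prop :
      Continuous fun x => 2 * gaussPdf x * (gaussPdf (x * t) * x)).aestronglyMeasurable
  · have h1 := gaussPdf_pos x
    have h2 := gaussPdf_pos (x * t)
    have h3 := gaussPdf_le_one (x * t)
    simp only [norm_mul, Real.norm_of_nonneg h1.le, Real.norm_of_nonneg h2.le, Real.norm_two]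
    calc 2 * gaussPdf x * (gaussPdf (x * t) * ‖x‖) = 2 * (‖x‖ * gaussPdf x) * gaussPdf (x * t) := by
          ring
      _ ≤ _ := mul_le_of_le_one_right (by positivity) h3
  · have h : Integrable fun x => x * gaussPdf x := by
      refine ((integrable_mul_exp_neg_mul_sq (b := 1 / 2) (by norm_num)).const_mul
        (√(2 * Real.pi))⁻¹).congr (ae_of_all _ fun x => ?_)
      simp only [gaussPdf]
      rw [show -(1 / 2) * x ^ 2 = -x ^ 2 / 2 by ring]
      ring
    exact (h.norm.const_mul 2).integrableOn
  · have h : HasDerivAt (fun t => x * t) x t := by simpa using (hasDerivAt_id t).const_mul x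
    exact ((hasDerivAt_gaussCdf (x * t)).comp t h).const_mul _

/-- the generalization of `gaussCdf_mills` from half-planes to wedges -/
lemma wedgeMass_mills (r : ℝ) {t : ℝ} (ht : 0 < t) :
    2 * gaussPdf r * gaussPdf (r * t) / (r ^ 2 * t * (1 + t ^ 2) + 3 * t + 1 / t) <
      wedgeMass r t := by
  set D : ℝ → ℝ := fun s => s ^ 2 * t * (1 + t ^ 2) + 3 * t + 1 / t with hD
  have hDpos : ∀ s, 0 < D s := fun s => by positivity
  have hDd : ∀ s, HasDerivAt D (2 * s * t * (1 + t ^ 2)) s := fun s => by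
    convert! ((((hasDerivAt_pow 2 s).mul_const t).mul_const (1 + t ^ 2)).add_const
      (3 * t)).add_const (1 / t) using 1
    simp
  have key := pos_of_hasDerivAt_pos_of_tendsto_atBot
    (f := fun s => wedgeMass s t - 2 * gaussPdf s * gaussPdf (s * t) / D s)
    (f' := fun s => 2 * gaussPdf s * (gaussCdf (s * t) +
      gaussPdf (s * t) * (s * (1 + t ^ 2) * (D s + 2 * t) / D s ^ 2)))
    (fun s => ?_) (fun s => ?_) ?_ r
  · exact sub_pos.1 key
  · have h1 : HasDerivAt (fun s => s * t) t s := by simpa using (hasDerivAt_id s).mul_const t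
    have h2 := ((((hasDerivAt_gaussPdf s).const_mul 2).mul
      ((hasDerivAt_gaussPdf (s * t)).comp s h1)).div (hDd s) (hDpos s).ne')
    convert! (hasDerivAt_wedgeMass_left s t).sub h2 using 1
    have := (hDpos s).ne'
    simp only [Pi.mul_apply, Function.comp]
    field_simp
    ring
  · have hp := gaussPdf_pos s
    have hq := gaussPdf_pos (s * t)
    have hm := gaussCdf_mills (s * t)
    refine mul_pos (by positivity) ?_
    rcases le_or_gt 0 s with hs | hs
    · have := gaussCdf_pos (s * t)
      have := hDpos s
      positivity
    · refine hm.trans_le (add_le_add_right ?_ _)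
      rw [mul_comm]
      refine mul_le_mul_of_nonneg_left ?_ hq.le
      have hE : t * D s = (1 + t ^ 2) * ((s * t) ^ 2 + 1) + 2 * t ^ 2 := by
        simp only [hD]
        field_simp
        ring
      have hle : (1 + t ^ 2) * (t * D s + 2 * t ^ 2) * ((s * t) ^ 2 + 1) ≤ (t * D s) ^ 2 := by
        rw [hE]
        nlinarith [sq_nonneg (t ^ 2)]
      have hle' : (1 + t ^ 2) * (D s + 2 * t) * ((s * t) ^ 2 + 1) ≤ t * D s ^ 2 :=
        le_of_mul_le_mul_left (by linarith) ht
      rw [div_le_div_iff₀ (by positivity) (by have := hDpos s; positivity)]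
      nlinarith [mul_le_mul_of_nonneg_left hle' (neg_nonneg.2 hs.le)]
  · have h : Tendsto (fun s => 2 * gaussPdf s * gaussPdf (s * t) / D s) atBot (𝓝 0) := by
      refine squeeze_zero (g := fun s => gaussPdf s * (2 * t)) (fun s => ?_) (fun s => ?_) ?_
      · have := hDpos s
        have := gaussPdf_pos s
        have := gaussPdf_pos (s * t)
        positivity
      · have hp := gaussPdf_pos s
        rw [div_le_iff₀ (hDpos s)]
        have h1 : 1 ≤ t * D s := by
          have : t * D s = s ^ 2 * t ^ 2 * (1 + t ^ 2) + 3 * t ^ 2 + 1 := by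
            simp only [hD]
            field_simp
          rw [this]
          nlinarith [show 0 ≤ s ^ 2 * t ^ 2 * (1 + t ^ 2) + 3 * t ^ 2 by positivity]
        nlinarith [mul_le_mul_of_nonneg_left ((gaussPdf_le_one (s * t)).trans h1) hp.le]
      · simpa using tendsto_gaussPdf_atBot.mul_const (2 * t)
    simpa using (tendsto_wedgeMass_atBot t).sub h

lemma not_isLocalMax_of_deriv_deriv_pos {f : ℝ → ℝ} {x : ℝ} (hf : 0 < deriv (deriv f) x)
    (hc : ContinuousAt f x) : ¬ IsLocalMax f x := fun hmax => by
  have hmin := isLocalMin_of_deriv_deriv_pos hf hmax.deriv_eq_zero hc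
  have heq : f =ᶠ[𝓝 x] fun _ => f x := by
    filter_upwards [hmax, hmin] with y h1 h2 using le_antisymm h1 h2
  have h := heq.deriv.deriv_eq
  simp at h
  exact hf.ne' h

lemma wedgeMass_le_rpow (r : ℝ) {t : ℝ} (ht : t ∈ Set.Icc (0 : ℝ) 1) :
    wedgeMass r t ≤ gaussCdf r ^ (1 + t ^ 2) := by
  set G : ℝ → ℝ := fun t => Real.log (wedgeMass r t) / (1 + t ^ 2) with hG
  set A : ℝ → ℝ := fun t => 2 * gaussPdf r * gaussPdf (r * t) with hA
  set H : ℝ → ℝ := fun t => -(A t / wedgeMass r t) - 2 * t * Real.log (wedgeMass r t) with hH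
  have hW : ∀ t, HasDerivAt (wedgeMass r) (-A t / (1 + t ^ 2)) t := hasDerivAt_wedgeMass_right r
  have hW0 : ∀ t, wedgeMass r t ≠ 0 := fun t => (wedgeMass_pos r t).ne'
  have hsq : ∀ t : ℝ, HasDerivAt (fun t : ℝ => 1 + t ^ 2) (2 * t) t := fun t => by
    simpa using (hasDerivAt_pow 2 t).const_add 1
  have hsq0 : ∀ t : ℝ, 1 + t ^ 2 ≠ 0 := fun t => by positivity
  have hGd : ∀ t, HasDerivAt G (H t / (1 + t ^ 2) ^ 2) t := fun t => by
    convert! ((hW t).log (hW0 t)).div (hsq t) (hsq0 t) using 1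
    have := hsq0 t
    have := hW0 t
    simp only [hH]
    field_simp
  have hAd : ∀ t, HasDerivAt A (-(r ^ 2 * t) * A t) t := fun t => by
    have h1 : HasDerivAt (fun t => r * t) r t := by simpa using (hasDerivAt_id t).const_mul r
    convert! ((hasDerivAt_gaussPdf (r * t)).comp t h1).const_mul (2 * gaussPdf r) using 1
    simp only [hA]
    ring
  have hHd : ∀ t, HasDerivAt H (r ^ 2 * t * (A t / wedgeMass r t) -
      (A t / wedgeMass r t) ^ 2 / (1 + t ^ 2) - 2 * Real.log (wedgeMass r t) +
      2 * t * (A t / wedgeMass r t) / (1 + t ^ 2)) t := fun t => by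
    convert! ((hAd t).div (hW t) (hW0 t)).neg.sub
      (((hasDerivAt_id t).const_mul 2).mul ((hW t).log (hW0 t))) using 1
    have := hsq0 t
    have := hW0 t
    simp
    field_simp
    ring
  have hcont : Continuous G := continuous_iff_continuousAt.2 fun t => (hGd t).continuousAt
  have hG0 : G 0 = Real.log (gaussCdf r) := by simp [hG, wedgeMass_zero]
  have hG1 : G 1 = Real.log (gaussCdf r) := by
    simp only [hG, wedgeMass_one, Real.log_pow]
    norm_num
  have hdG : deriv G = fun t => H t / (1 + t ^ 2) ^ 2 := funext fun t => (hGd t).deriv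
  have hnomax : ∀ x ∈ Set.Ioo (0 : ℝ) 1, ¬ IsLocalMax G x := fun x hx hmax => by
    have hHx : H x = 0 := by
      have h := hmax.deriv_eq_zero
      rw [hdG] at h
      simpa [hsq0 x] using h
    refine not_isLocalMax_of_deriv_deriv_pos ?_ hcont.continuousAt hmax
    rw [hdG]
    refine lt_of_lt_of_eq ?_ ((hHd x).div ((hsq x).pow 2) (pow_ne_zero 2 (hsq0 x))).deriv.symm
    simp only [hHx, zero_mul, sub_zero]
    have hx0 : 0 < x := hx.1
    have hWpos := wedgeMass_pos r x
    have hApos : 0 < A x := by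
      have := gaussPdf_pos r
      have := gaussPdf_pos (r * x)
      positivity
    set a := A x / wedgeMass r x with ha
    have hapos : 0 < a := by positivity
    have hlt : a < r ^ 2 * x * (1 + x ^ 2) + 3 * x + 1 / x := by
      have h := wedgeMass_mills r hx0
      rw [div_lt_iff₀ (by positivity)] at h
      rw [ha, div_lt_iff₀ hWpos]
      linarith
    have hlog : Real.log (wedgeMass r x) = -a / (2 * x) := by
      rw [eq_div_iff (by positivity)]
      linarith [show -a - 2 * x * Real.log (wedgeMass r x) = 0 from hHx]
    rw [hlog, show r ^ 2 * x * a - a ^ 2 / (1 + x ^ 2) - 2 * (-a / (2 * x)) +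
      2 * x * a / (1 + x ^ 2) =
      a / (1 + x ^ 2) * (r ^ 2 * x * (1 + x ^ 2) + 3 * x + 1 / x - a) by field_simp; ring]
    have hsub := sub_pos.2 hlt
    exact div_pos (mul_pos (mul_pos (by positivity) hsub) (by simp only [Pi.pow_apply]; positivity))
      (by simp only [Pi.pow_apply]; positivity)
  obtain ⟨x, hx, hmax⟩ := isCompact_Icc.exists_isMaxOn ⟨t, ht⟩ hcont.continuousOn
  have hGx : G x = Real.log (gaussCdf r) := by
    rcases hx.1.eq_or_lt with h | h0
    · rw [← h, hG0]
    rcases hx.2.eq_or_lt with h | h1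
    · rw [h, hG1]
    exact absurd (hmax.isLocalMax (Icc_mem_nhds h0 h1)) (hnomax x ⟨h0, h1⟩)
  have hle : G t ≤ Real.log (gaussCdf r) := hGx ▸ hmax ht
  rw [← Real.log_le_log_iff (wedgeMass_pos r t) (Real.rpow_pos_of_pos (gaussCdf_pos r) _),
    Real.log_rpow (gaussCdf_pos r), mul_comm]
  exact (div_le_iff₀ (by positivity)).1 hle

lemma biGaussianDensity_eq {ρ : ℝ} (hρ : ρ ^ 2 < 1) (x y : ℝ) :
    biGaussianDensity ρ (x, y) =
      gaussPdf x * gaussianPDFReal (ρ * x) (1 - ρ ^ 2).toNNReal y := by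
  have h0 : 0 < 1 - ρ ^ 2 := by linarith
  have h1 : √(2 * Real.pi) * √(2 * Real.pi * (1 - ρ ^ 2)) = 2 * Real.pi * √(1 - ρ ^ 2) := by
    rw [Real.sqrt_mul (by positivity) (1 - ρ ^ 2), ← mul_assoc,
      Real.mul_self_sqrt (by positivity)]
  have h2 : -(x ^ 2 - 2 * ρ * x * y + y ^ 2) / (2 * (1 - ρ ^ 2)) =
      -x ^ 2 / 2 + -(y - ρ * x) ^ 2 / (2 * (1 - ρ ^ 2)) := by
    field_simp
    ring
  simp only [biGaussianDensity, gaussPdf, gaussianPDFReal, Real.coe_toNNReal _ h0.le]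
  rw [h2, Real.exp_add, ← h1, one_div, mul_inv]
  ring

lemma withDensity_biGaussianDensity_apply {ρ : ℝ} (hρ : ρ ^ 2 < 1) {s : Set (ℝ × ℝ)}
    (hs : MeasurableSet s) :
    (volume.withDensity fun p => ENNReal.ofReal (biGaussianDensity ρ p)) s =
      ∫⁻ x, ENNReal.ofReal (gaussPdf x) *
        gaussianReal (ρ * x) (1 - ρ ^ 2).toNNReal (Prod.mk x ⁻¹' s) := by
  have hv : (1 - ρ ^ 2).toNNReal ≠ 0 := by simpa using hρ
  have hm : Measurable fun p : ℝ × ℝ => ENNReal.ofReal (biGaussianDensity ρ p) := by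
    unfold biGaussianDensity
    fun_prop
  rw [withDensity_apply _ hs, ← lintegral_indicator hs, Measure.volume_eq_prod,
    lintegral_prod _ (hm.indicator hs).aemeasurable]
  refine lintegral_congr fun x => ?_
  rw [gaussianReal_apply _ hv, ← lintegral_const_mul _ (measurable_gaussianPDF _ _),
    ← lintegral_indicator (measurable_prodMk_left hs)]
  refine lintegral_congr fun y => ?_
  by_cases h : (x, y) ∈ s
  · rw [Set.indicator_of_mem h, Set.indicator_of_mem (by exact h), biGaussianDensity_eq hρ,
      ENNReal.ofReal_mul (gaussPdf_pos x).le, gaussianPDF]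
  · rw [Set.indicator_of_notMem h, Set.indicator_of_notMem (by exact h)]

lemma gaussianReal_Iic (m x : ℝ) {σ : ℝ} (hσ : 0 < σ) :
    gaussianReal m (σ ^ 2).toNNReal (Set.Iic x) = ENNReal.ofReal (gaussCdf ((x - m) / σ)) := by
  have h : gaussianReal m (σ ^ 2).toNNReal = (gaussianReal 0 1).map (fun z => m + σ * z) := by
    have h1 := gaussianReal_map_const_mul (μ := 0) (v := 1) σ
    have h2 := gaussianReal_map_const_add (μ := 0) (v := (σ ^ 2).toNNReal) m
    have h3 : NNReal.mk (σ ^ 2) (sq_nonneg σ) = (σ ^ 2).toNNReal :=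
      (Real.toNNReal_of_nonneg (sq_nonneg σ)).symm
    rw [mul_zero, mul_one, h3] at h1
    rw [zero_add, ← h1, Measure.map_map (by fun_prop) (by fun_prop)] at h2
    exact h2.symm
  rw [gaussCdf_eq, h, Measure.map_apply (by fun_prop) measurableSet_Iic]
  congr 1
  ext z
  simp only [Set.mem_preimage, Set.mem_Iic]
  rw [le_div_iff₀ hσ]
  constructor <;> intro <;> linarith

lemma biGaussian_marginal {ρ : ℝ} (hρ : ρ ^ 2 < 1) (r : ℝ) :
    (volume.withDensity fun p => ENNReal.ofReal (biGaussianDensity ρ p)) {p | p.1 ≤ r} =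
      ENNReal.ofReal (gaussCdf r) := by
  rw [withDensity_biGaussianDensity_apply hρ (measurableSet_le measurable_fst measurable_const),
    gaussCdf, ofReal_integral_eq_lintegral_ofReal integrable_gaussPdf.integrableOn
      (ae_of_all _ fun x => (gaussPdf_pos x).le), ← lintegral_indicator measurableSet_Iic]
  refine lintegral_congr fun x => ?_
  by_cases h : x ≤ r <;> simp [h]

lemma measurableSet_triangle (r : ℝ) : MeasurableSet {p : ℝ × ℝ | p.1 ≤ r ∧ p.2 ≤ p.1} :=
  (measurableSet_le measurable_fst measurable_const).inter
    (measurableSet_le measurable_snd measurable_fst)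

lemma biGaussian_triangle {ρ : ℝ} (hρ : ρ ^ 2 < 1) (r : ℝ) :
    2 * (volume.withDensity fun p => ENNReal.ofReal (biGaussianDensity ρ p))
        {p | p.1 ≤ r ∧ p.2 ≤ p.1} =
      ENNReal.ofReal (wedgeMass r ((1 - ρ) / √(1 - ρ ^ 2))) := by
  have hσ : 0 < √(1 - ρ ^ 2) := Real.sqrt_pos.2 (by linarith)
  have hσ2 : √(1 - ρ ^ 2) ^ 2 = 1 - ρ ^ 2 := Real.sq_sqrt (by linarith)
  rw [withDensity_biGaussianDensity_apply hρ (measurableSet_triangle r),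
    wedgeMass, ofReal_integral_eq_lintegral_ofReal (integrable_wedge _).integrableOn
      (ae_of_all _ fun x => mul_nonneg (mul_nonneg zero_le_two (gaussPdf_pos x).le)
        (gaussCdf_pos _).le), ← lintegral_indicator measurableSet_Iic,
    ← lintegral_const_mul' _ _ (by simp)]
  refine lintegral_congr fun x => ?_
  by_cases h : x ≤ r
  · have hset : Prod.mk x ⁻¹' {p : ℝ × ℝ | p.1 ≤ r ∧ p.2 ≤ p.1} = Set.Iic x := by
      ext y
      simp [h]
    rw [hset, ← hσ2, gaussianReal_Iic _ _ hσ, Set.indicator_of_mem (by exact h),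
      show (x - ρ * x) / √(1 - ρ ^ 2) = x * ((1 - ρ) / √(1 - ρ ^ 2)) by ring, hσ2,
      ENNReal.ofReal_mul (mul_nonneg zero_le_two (gaussPdf_pos x).le),
      ENNReal.ofReal_mul zero_le_two, ENNReal.ofReal_ofNat, mul_assoc]
  · simp [h]

lemma biGaussian_quadrant_le {ρ : ℝ} (hρ : ρ ^ 2 < 1) (r : ℝ) :
    (volume.withDensity fun p => ENNReal.ofReal (biGaussianDensity ρ p))
        {p | p.1 ≤ r ∧ p.2 ≤ r} ≤
      ENNReal.ofReal (wedgeMass r ((1 - ρ) / √(1 - ρ ^ 2))) := by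
  set μ := volume.withDensity fun p => ENNReal.ofReal (biGaussianDensity ρ p) with hμ
  have hsT := measurableSet_triangle r
  have hswap : μ (Prod.swap ⁻¹' {p | p.1 ≤ r ∧ p.2 ≤ p.1}) = μ {p | p.1 ≤ r ∧ p.2 ≤ p.1} := by
    rw [hμ, withDensity_apply _ hsT, withDensity_apply _ (measurable_swap hsT)]
    refine Eq.trans (lintegral_congr fun p => ?_) ((Measure.measurePreserving_swap
      (μ := (volume : Measure ℝ)) (ν := (volume : Measure ℝ))).setLIntegral_comp_preimage_emb
        MeasurableEquiv.prodComm.measurableEmbedding _ _)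
    simp only [biGaussianDensity, Prod.fst_swap, Prod.snd_swap]
    ring_nf
  calc μ {p | p.1 ≤ r ∧ p.2 ≤ r}
      ≤ μ ({p | p.1 ≤ r ∧ p.2 ≤ p.1} ∪ Prod.swap ⁻¹' {p | p.1 ≤ r ∧ p.2 ≤ p.1}) := by
        refine measure_mono fun p hp => ?_
        rcases le_total p.2 p.1 with h | h
        · exact Or.inl ⟨hp.1, h⟩
        · exact Or.inr ⟨hp.2, h⟩
    _ ≤ _ := measure_union_le _ _
    _ = _ := by rw [hswap, ← two_mul, biGaussian_triangle hρ]

theorem gaussian_halfspace_hypercontractivity (ε : ℝ) (hε : ε ∈ Set.Ioo (0 : ℝ) 1)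
    (r : ℝ) (μ : Measure (ℝ × ℝ))
    (hμ : μ = volume.withDensity (fun p => ENNReal.ofReal (biGaussianDensity (1 - ε) p))) :
    (μ {p | p.1 ≤ r ∧ p.2 ≤ r}).toReal ≤
        (μ {p | p.1 ≤ r}).toReal ^ (2 / (2 - ε)) ∧
      (μ {p | p.1 ≤ r ∧ p.2 ≤ r}).toReal ≤
        (μ {p | p.1 ≤ r}).toReal ^ (1 + ε / 2) := by
  obtain ⟨h0, h1⟩ := hε
  have hρ : (1 - ε) ^ 2 < 1 := by nlinarith
  have hσ : 0 < √(1 - (1 - ε) ^ 2) := Real.sqrt_pos.2 (by linarith)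
  set t := (1 - (1 - ε)) / √(1 - (1 - ε) ^ 2) with ht
  have ht2 : t ^ 2 = ε / (2 - ε) := by
    rw [ht, div_pow, Real.sq_sqrt (by linarith), div_eq_div_iff (by nlinarith) (by linarith)]
    ring
  have ht0 : 0 ≤ t := div_nonneg (by linarith) hσ.le
  have ht1 : t ≤ 1 := by
    have : t ^ 2 ≤ 1 := by
      rw [ht2, div_le_one (by linarith)]
      linarith
    nlinarith
  have hexp : 1 + t ^ 2 = 2 / (2 - ε) := by
    rw [ht2]
    have : 2 - ε ≠ 0 := by linarith
    field_simp
    ring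
  have hmain : (μ {p | p.1 ≤ r ∧ p.2 ≤ r}).toReal ≤ gaussCdf r ^ (2 / (2 - ε)) := by
    rw [← hexp]
    refine le_trans ?_ (wedgeMass_le_rpow r ⟨ht0, ht1⟩)
    rw [hμ]
    exact ENNReal.toReal_le_of_le_ofReal (wedgeMass_pos r t).le (biGaussian_quadrant_le hρ r)
  have hmarg : (μ {p | p.1 ≤ r}).toReal = gaussCdf r := by
    rw [hμ, biGaussian_marginal hρ, ENNReal.toReal_ofReal (gaussCdf_pos r).le]
  rw [hmarg]
  refine ⟨hmain, hmain.trans ?_⟩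
  refine Real.rpow_le_rpow_of_exponent_ge (gaussCdf_pos r) (gaussCdf_le_one r) ?_
  rw [le_div_iff₀ (by linarith)]
  nlinarith [sq_nonneg ε]
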